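/- For every f ∈ F_(C,β) and every ξ > 0 there exists f₂ ∈ F_(C,β) such that for each fixed x ∈ [0,1] the map y ↦ f₂(x,y) is C² on [0,1], and d_α(f₂, f) < ξ/3. In particular, the elements of F_(C,β) that are C² in the second variable are dense in (F_(C,β), d_α). -/

import Mathlib

open MeasureTheory Set Filter Topology
open scoped ENNReal

noncomputable section

/-- The unit square `M = [0,1]²`. -/
def MSq : Set (ℝ × ℝ) := unitInterval ×ˢ unitInterval

/-- Lower `(C,γ)`-bi-Hölder bound in the second variable. -/
def BiHolderLower (C γ : ℝ) (f : ℝ → ℝ → ℝ) : Prop :=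
  ∀ x ∈ unitInterval, ∀ y₁ ∈ unitInterval, ∀ y₂ ∈ unitInterval, y₁ ≠ y₂ →
    C⁻¹ * |y₂ - y₁| ^ (1 / γ) ≤ |f x y₂ - f x y₁|

/-- Upper `(C,γ)`-Hölder bound in the second variable. -/
def BiHolderUpper (C γ : ℝ) (f : ℝ → ℝ → ℝ) : Prop :=
  ∀ x ∈ unitInterval, ∀ y₁ ∈ unitInterval, ∀ y₂ ∈ unitInterval, y₁ ≠ y₂ →
    |f x y₂ - f x y₁| ≤ C * |y₂ - y₁| ^ γ

/-- Membership in the space `F_(C,γ)`: conditions (i)–(iv); `fx` plays the role of `∂f/∂x`. -/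
structure IsFol (C γ : ℝ) (f fx : ℝ → ℝ → ℝ) : Prop where
  mapsTo : ∀ x ∈ unitInterval, ∀ y ∈ unitInterval, f x y ∈ unitInterval
  hasDeriv : ∀ y ∈ unitInterval, ∀ x ∈ unitInterval,
    HasDerivWithinAt (fun x' => f x' y) (fx x y) unitInterval x
  derivCont : ContinuousOn (fun p : ℝ × ℝ => fx p.1 p.2) MSq
  eq_id : ∀ y ∈ unitInterval, f 0 y = y
  eq_bot : ∀ x ∈ unitInterval, f x 0 = 0
  eq_top : ∀ x ∈ unitInterval, f x 1 = 1
  lower : BiHolderLower C γ f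
  upper : BiHolderUpper C γ f

/-- The space `F_(C,γ)`. -/
structure Fol (C γ : ℝ) where
  f : ℝ → ℝ → ℝ
  fx : ℝ → ℝ → ℝ
  isFol : IsFol C γ f fx

/-- The inverse of `y ↦ f x y` on `[0,1]`, i.e. the holonomy `h^f_{x,0}`. -/
def hinv (f : ℝ → ℝ → ℝ) (x : ℝ) : ℝ → ℝ := Function.invFunOn (f x) unitInterval

/-- The `C⁰` distance over the square. -/
def C0dist (u v : ℝ → ℝ → ℝ) : ℝ :=
  sSup {r | ∃ x ∈ unitInterval, ∃ y ∈ unitInterval, r = |u x y - v x y|}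

/-- The `α`-Hölder seminorm of the difference `h - k` on `[0,1]`. -/
def holDist (α : ℝ) (h k : ℝ → ℝ) : ℝ :=
  sSup {r | ∃ y₁ ∈ unitInterval, ∃ y₂ ∈ unitInterval, y₁ ≠ y₂ ∧
    r = |(h y₂ - k y₂) - (h y₁ - k y₁)| / |y₂ - y₁| ^ α}

/-- The distance `d_α`, on raw data `(f, ∂f/∂x)`, `(g, ∂g/∂x)`. -/
def dalpha (α : ℝ) (f fx g gx : ℝ → ℝ → ℝ) : ℝ :=
  C0dist f g + C0dist fx gx +
    sSup {r | ∃ x ∈ unitInterval,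
      r = max (holDist α (f x) (g x)) (holDist α (hinv f x) (hinv g x))}

/-- The distance `d_α` on `F_(C,γ)`. -/
def dalphaF {C γ : ℝ} (α : ℝ) (F G : Fol C γ) : ℝ := dalpha α F.f F.fx G.f G.fx

/-- Openness with respect to a distance function. -/
def IsOpenWrt {X : Type*} (d : X → X → ℝ) (s : Set X) : Prop :=
  ∀ f ∈ s, ∃ ε > 0, ∀ g, d g f < ε → g ∈ s

/-- Density with respect to a distance function. -/
def IsDenseWrt {X : Type*} (d : X → X → ℝ) (s : Set X) : Prop :=
  ∀ f : X, ∀ ε > 0, ∃ g ∈ s, d g f < ε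

/-- Lebesgue measure `μ` on the unit square `M`. -/
def muM : Measure (ℝ × ℝ) := volume.restrict MSq

/-- The projection `π_f(x,z) = f(x,·)⁻¹(z)` along the leaves. -/
def projF (f : ℝ → ℝ → ℝ) : ℝ × ℝ → ℝ := fun p => hinv f p.1 p.2

/-- The quotient measure `μ̂ = (π_f)_* μ`. -/
def quotM {C γ : ℝ} (F : Fol C γ) : Measure ℝ := muM.map (projF F.f)

/-- The leaf `L_y = {(x, f(x,y)) : x ∈ [0,1]}`. -/
def Leaf {C γ : ℝ} (F : Fol C γ) (y : ℝ) : Set (ℝ × ℝ) :=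
  (fun x => (x, F.f x y)) '' unitInterval

/-- `(ν_y)` is a Rokhlin disintegration of Lebesgue measure on the square w.r.t. `π_f`. -/
def IsDisint {C γ : ℝ} (F : Fol C γ) (ν : ℝ → Measure (ℝ × ℝ)) : Prop :=
  (∀ y, IsProbabilityMeasure (ν y)) ∧
  (∀ E : Set (ℝ × ℝ), MeasurableSet E → Measurable fun y => ν y E) ∧
  (∀ᵐ y ∂quotM F, ν y (Leaf F y) = 1) ∧
  (∀ E : Set (ℝ × ℝ), MeasurableSet E → muM E = ∫⁻ y, ν y E ∂quotM F)

/-- The element `P_i` of the partition `P_{f,n}`. -/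
def Pelt (f : ℝ → ℝ → ℝ) (n i : ℕ) : Set (ℝ × ℝ) :=
  {p | p.1 ∈ unitInterval ∧ f p.1 ((i : ℝ) / 2 ^ n) ≤ p.2 ∧ p.2 < f p.1 (((i : ℝ) + 1) / 2 ^ n)}

/-- `Ĩ = [b₁,b₂] × [0,1]`. -/
def Itilde (b₁ b₂ : ℝ) : Set (ℝ × ℝ) := Icc b₁ b₂ ×ˢ unitInterval

/-- The set `A_{n,m,I}`. -/
def Aset (C γ : ℝ) (n m : ℕ) (b₁ b₂ : ℝ) : Set (Fol C γ) :=
  {F | ∀ i < 2 ^ n,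
    muM (Pelt F.f n i ∩ Itilde b₁ b₂) / muM (Pelt F.f n i) < 1 / (m : ℝ≥0∞) ∨
    1 - 1 / (m : ℝ≥0∞) < muM (Pelt F.f n i ∩ Itilde b₁ b₂) / muM (Pelt F.f n i)}

/-- The set `B_{m,I}`. -/
def Bset (C γ : ℝ) (m : ℕ) (b₁ b₂ : ℝ) : Set (Fol C γ) := ⋃ n : ℕ, Aset C γ n m b₁ b₂

/-- The leaf measure `λ_y`: pushforward of 1-dimensional Lebesgue measure on `[0,1]`
under `x ↦ (x, f(x,y))`. -/
def leafMeas {C γ : ℝ} (F : Fol C γ) (y : ℝ) : Measure (ℝ × ℝ) :=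
  (volume.restrict unitInterval).map fun x => (x, F.f x y)

/-- Bernstein sum of a sequence. -/
def Bs (n : ℕ) (y : ℝ) (g : ℕ → ℝ) : ℝ :=
  ∑ ij ∈ Finset.HasAntidiagonal.antidiagonal n, (n.choose ij.1 : ℝ) * (y ^ ij.1 * (1 - y) ^ ij.2 * g ij.1)

lemma Bs_succ (n : ℕ) (y : ℝ) (g : ℕ → ℝ) :
    Bs (n + 1) y g = (1 - y) * Bs n y g + y * Bs n y (fun k => g (k + 1)) := by
  unfold Bs
  rw [Finset.sum_antidiagonal_choose_succ_mul (fun i j => y ^ i * (1 - y) ^ j * g i),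
    Finset.mul_sum, Finset.mul_sum]
  congr 1
  · refine Finset.sum_congr rfl fun ij _ => ?_
    ring
  · refine Finset.sum_congr rfl fun ij h => ?_
    rw [Nat.choose_symm_of_eq_add (Finset.HasAntidiagonal.mem_antidiagonal.1 h).symm]
    ring

lemma Bs_zero (y : ℝ) (g : ℕ → ℝ) : Bs 0 y g = g 0 := by simp [Bs]

lemma Bs_add (n : ℕ) (y : ℝ) (g h : ℕ → ℝ) :
    Bs n y (fun k => g k + h k) = Bs n y g + Bs n y h := by
  unfold Bs
  rw [← Finset.sum_add_distrib]
  refine Finset.sum_congr rfl fun ij _ => ?_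
  ring

lemma Bs_div (n : ℕ) (y c : ℝ) (g : ℕ → ℝ) :
    Bs n y (fun k => g k / c) = Bs n y g / c := by
  unfold Bs
  rw [Finset.sum_div]
  refine Finset.sum_congr rfl fun ij _ => ?_
  ring

lemma Bs_one (n : ℕ) (y : ℝ) : Bs n y (fun _ => 1) = 1 := by
  induction n with
  | zero => simp [Bs_zero]
  | succ n ih => rw [Bs_succ, ih]; ring

lemma Bs_id (n : ℕ) (y : ℝ) : Bs n y (fun k => (k : ℝ)) = n * y := by
  induction n with
  | zero => simp [Bs_zero]
  | succ n ih =>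
    rw [Bs_succ, ih]
    push_cast
    rw [Bs_add n y (fun k => (k : ℝ)) (fun _ => 1), ih, Bs_one]
    ring

lemma Bs_coupling (y₁ y₂ : ℝ) (h0 : 0 ≤ y₁) (h12 : y₁ ≤ y₂) (h1 : y₂ ≤ 1) (n : ℕ) :
    ∃ (ι : Type) (_ : Fintype ι) (w : ι → ℝ) (k m : ι → ℕ), (∀ i, 0 ≤ w i) ∧ ∑ i, w i = 1 ∧
      (∀ i, k i ≤ m i) ∧ (∀ i, m i ≤ n) ∧ (∀ g, Bs n y₁ g = ∑ i, w i * g (k i)) ∧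
      (∀ g, Bs n y₂ g = ∑ i, w i * g (m i)) := by
  induction n with
  | zero =>
    refine ⟨Unit, inferInstance, fun _ => 1, fun _ => 0, fun _ => 0, ?_⟩
    simp [Bs_zero]
  | succ n ih =>
    obtain ⟨ι, _, w, k, m, hw, hs, hkm, hm, hk, hm2⟩ := ih
    refine ⟨ι ⊕ (ι ⊕ ι), inferInstance,
      Sum.elim (fun i => y₁ * w i) (Sum.elim (fun i => (y₂ - y₁) * w i) (fun i => (1 - y₂) * w i)),
      Sum.elim (fun i => k i + 1) (Sum.elim k k),
      Sum.elim (fun i => m i + 1) (Sum.elim (fun i => m i + 1) m), ?_, ?_, ?_, ?_, ?_, ?_⟩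
    · rintro (i | i | i) <;> simp <;> apply mul_nonneg <;> first | exact hw i | linarith
    · simp [← Finset.mul_sum, hs]
    · rintro (i | i | i) <;> simp <;> have := hkm i <;> omega
    · rintro (i | i | i) <;> simp <;> have := hm i <;> omega
    · intro g
      rw [Bs_succ, hk, hk]
      simp [mul_assoc, ← Finset.mul_sum]
      ring
    · intro g
      rw [Bs_succ, hm2, hm2]
      simp [mul_assoc, ← Finset.mul_sum]
      ring

/-- The Bernstein polynomial of `g`. -/
def Bn (n : ℕ) (g : ℝ → ℝ) (y : ℝ) : ℝ := Bs n y (fun k => g (k / n))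

lemma Bn_contDiff (n : ℕ) (g : ℝ → ℝ) : ContDiff ℝ 2 (Bn n g) := by
  unfold Bn Bs
  fun_prop

lemma node_mem {n k : ℕ} (hk : k ≤ n) : (k : ℝ) / n ∈ unitInterval := by
  refine ⟨by positivity, div_le_one_of_le₀ (by exact_mod_cast hk) (by positivity)⟩

lemma Bn_coupling (y₁ y₂ : ℝ) (h0 : 0 ≤ y₁) (h12 : y₁ ≤ y₂) (h1 : y₂ ≤ 1) (n : ℕ) (hn : n ≠ 0) :
    ∃ (ι : Type) (_ : Fintype ι) (w : ι → ℝ) (a b : ι → ℝ), (∀ i, 0 ≤ w i) ∧ ∑ i, w i = 1 ∧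
      (∀ i, a i ≤ b i) ∧ (∀ i, a i ∈ unitInterval) ∧ (∀ i, b i ∈ unitInterval) ∧
      (∑ i, w i * (b i - a i) = y₂ - y₁) ∧
      (∀ g, Bn n g y₂ - Bn n g y₁ = ∑ i, w i * (g (b i) - g (a i))) := by
  obtain ⟨ι, _, w, k, m, hw, hs, hkm, hm, hk, hm2⟩ := Bs_coupling y₁ y₂ h0 h12 h1 n
  have key : ∀ g, Bn n g y₂ - Bn n g y₁
      = ∑ i, w i * (g ((m i : ℝ) / n) - g ((k i : ℝ) / n)) := by
    intro g
    unfold Bn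
    rw [hk, hm2, ← Finset.sum_sub_distrib]
    exact Finset.sum_congr rfl fun i _ => by ring
  have hn' : (n : ℝ) ≠ 0 := by exact_mod_cast hn
  refine ⟨ι, inferInstance, w, fun i => k i / n, fun i => m i / n, hw, hs, ?_,
    fun i => node_mem ((hkm i).trans (hm i)), fun i => node_mem (hm i), ?_, key⟩
  · intro i
    have : (k i : ℝ) ≤ m i := by exact_mod_cast hkm i
    dsimp only
    gcongr
  · have := key (fun y => y)
    rw [← this]
    unfold Bn
    rw [Bs_div, Bs_div, Bs_id, Bs_id]
    field_simp

lemma Bn_upper {C β : ℝ} (hC : 0 ≤ C) (hβ0 : 0 < β) (hβ1 : β ≤ 1) (g : ℝ → ℝ)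
    (hg : ∀ y₁ ∈ unitInterval, ∀ y₂ ∈ unitInterval, y₁ ≠ y₂ → |g y₂ - g y₁| ≤ C * |y₂ - y₁| ^ β)
    (n : ℕ) (hn : n ≠ 0) (y₁ y₂ : ℝ) (h0 : 0 ≤ y₁) (h12 : y₁ ≤ y₂) (h1 : y₂ ≤ 1) :
    |Bn n g y₂ - Bn n g y₁| ≤ C * |y₂ - y₁| ^ β := by
  obtain ⟨ι, _, w, a, b, hw, hs, hab, ha, hb, hid, hB⟩ := Bn_coupling y₁ y₂ h0 h12 h1 n hn
  have hJ := (Real.concaveOn_rpow hβ0.le hβ1).le_map_sum (t := Finset.univ) (w := w)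
    (p := fun i => b i - a i) (fun i _ => hw i) hs (fun i _ => sub_nonneg.2 (hab i))
  simp only [smul_eq_mul] at hJ
  rw [hid] at hJ
  rw [hB, abs_of_nonneg (sub_nonneg.2 h12)]
  calc _ ≤ ∑ i, |w i * (g (b i) - g (a i))| := Finset.abs_sum_le_sum_abs _ _
    _ ≤ ∑ i, C * (w i * (b i - a i) ^ β) := by
      refine Finset.sum_le_sum fun i _ => ?_
      rw [abs_mul, abs_of_nonneg (hw i)]
      have : |g (b i) - g (a i)| ≤ C * (b i - a i) ^ β := by
        by_cases h : a i = b i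
        · simp [h, Real.zero_rpow hβ0.ne']
        · have := hg _ (ha i) _ (hb i) h
          rwa [abs_of_nonneg (sub_nonneg.2 (hab i))] at this
      calc _ ≤ w i * (C * (b i - a i) ^ β) := mul_le_mul_of_nonneg_left this (hw i)
        _ = _ := by ring
    _ = C * ∑ i, w i * (b i - a i) ^ β := by rw [Finset.mul_sum]
    _ ≤ _ := mul_le_mul_of_nonneg_left hJ hC

lemma Bn_lower {C γ : ℝ} (hC : 0 ≤ C) (hγ : 1 ≤ γ) (g : ℝ → ℝ)
    (hmono : MonotoneOn g unitInterval)
    (hg : ∀ y₁ ∈ unitInterval, ∀ y₂ ∈ unitInterval, y₁ ≠ y₂ → C * |y₂ - y₁| ^ γ ≤ |g y₂ - g y₁|)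
    (n : ℕ) (hn : n ≠ 0) (y₁ y₂ : ℝ) (h0 : 0 ≤ y₁) (h12 : y₁ ≤ y₂) (h1 : y₂ ≤ 1) :
    C * |y₂ - y₁| ^ γ ≤ |Bn n g y₂ - Bn n g y₁| := by
  obtain ⟨ι, _, w, a, b, hw, hs, hab, ha, hb, hid, hB⟩ := Bn_coupling y₁ y₂ h0 h12 h1 n hn
  have hJ := (convexOn_rpow hγ).map_sum_le (t := Finset.univ) (w := w)
    (p := fun i => b i - a i) (fun i _ => hw i) hs (fun i _ => sub_nonneg.2 (hab i))
  simp only [smul_eq_mul] at hJ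
  rw [hid] at hJ
  rw [hB, abs_of_nonneg (sub_nonneg.2 h12)]
  calc C * (y₂ - y₁) ^ γ ≤ C * ∑ i, w i * (b i - a i) ^ γ := mul_le_mul_of_nonneg_left hJ hC
    _ = ∑ i, C * (w i * (b i - a i) ^ γ) := by rw [Finset.mul_sum]
    _ ≤ ∑ i, w i * (g (b i) - g (a i)) := by
      refine Finset.sum_le_sum fun i _ => ?_
      have : C * (b i - a i) ^ γ ≤ g (b i) - g (a i) := by
        by_cases h : a i = b i
        · simp [h, Real.zero_rpow (by linarith : γ ≠ 0)]
        · have := hg _ (ha i) _ (hb i) h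
          rwa [abs_of_nonneg (sub_nonneg.2 (hab i)),
            abs_of_nonneg (sub_nonneg.2 (hmono (ha i) (hb i) (hab i)))] at this
      calc _ = w i * (C * (b i - a i) ^ γ) := by ring
        _ ≤ _ := mul_le_mul_of_nonneg_left this (hw i)
    _ ≤ _ := le_abs_self _

lemma Bn_at_zero (n : ℕ) (g : ℝ → ℝ) : Bn n g 0 = g 0 := by
  unfold Bn
  have : ∀ (n : ℕ) (g : ℕ → ℝ), Bs n 0 g = g 0 := by
    intro n
    induction n with
    | zero => simp [Bs_zero]
    | succ n ih => intro g; rw [Bs_succ, ih]; ring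
  rw [this]; simp

lemma Bn_at_one (n : ℕ) (hn : n ≠ 0) (g : ℝ → ℝ) : Bn n g 1 = g 1 := by
  unfold Bn
  have : ∀ (n : ℕ) (g : ℕ → ℝ), Bs n 1 g = g n := by
    intro n
    induction n with
    | zero => simp [Bs_zero]
    | succ n ih => intro g; rw [Bs_succ, ih, ih]; ring
  rw [this]; simp [hn]

lemma Bn_congr {n : ℕ} {g h : ℝ → ℝ} (H : ∀ y ∈ unitInterval, g y = h y) (y : ℝ) :
    Bn n g y = Bn n h y := by
  unfold Bn Bs
  refine Finset.sum_congr rfl fun ij hij => ?_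
  beta_reduce
  rw [H _ (node_mem _)]
  have := Finset.HasAntidiagonal.mem_antidiagonal.1 hij
  omega

lemma Bn_id (n : ℕ) (hn : n ≠ 0) (y : ℝ) : Bn n (fun y => y) y = y := by
  unfold Bn
  rw [Bs_div, Bs_id]
  field_simp

open unitInterval in
lemma Bn_uniform (u : ℝ → ℝ → ℝ) (hu : ContinuousOn (fun p : ℝ × ℝ => u p.1 p.2) MSq)
    (ε : ℝ) (hε : 0 < ε) :
    ∀ᶠ n : ℕ in atTop, ∀ x ∈ unitInterval, ∀ y ∈ unitInterval, |Bn n (u x) y - u x y| < ε := by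
  have hc : Continuous (fun p : I × I => u p.2 p.1) := by
    have := hu.comp_continuous (f := fun p : I × I => ((p.2 : ℝ), (p.1 : ℝ))) (by fun_prop)
      (fun p => ⟨p.2.2, p.1.2⟩)
    exact this
  let G : C(I × I, ℝ) := ⟨_, hc⟩
  have := bernsteinApproximation_uniform G.curry
  obtain ⟨N, hN⟩ := (Metric.tendsto_atTop (α := C(I, C(I, ℝ)))).1 this ε hε
  filter_upwards [eventually_ge_atTop N] with n hn x hx y hy
  have h1 := (ContinuousMap.dist_lt_iff hε).1 (hN n hn) ⟨y, hy⟩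
  have h2 := (ContinuousMap.dist_lt_iff hε).1 h1 ⟨x, hx⟩
  rw [Real.dist_eq] at h2
  change |Bn n (u x) y - G.curry ⟨y, hy⟩ ⟨x, hx⟩| < ε
  convert h2 using 3
  rw [bernsteinApproximation.apply, ContinuousMap.sum_apply]
  unfold Bn Bs
  rw [Finset.Nat.sum_antidiagonal_eq_sum_range_succ
    (fun i j => (n.choose i : ℝ) * (y ^ i * (1 - y) ^ j * u x (i / n))), Finset.sum_range]
  refine Finset.sum_congr rfl fun k _ => ?_
  rw [ContinuousMap.smul_apply, bernstein_apply]
  simp [G, bernstein.z, ContinuousMap.curry]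
  ring

lemma fol_cont {C β : ℝ} (hβ0 : 0 < β) {f fx : ℝ → ℝ → ℝ} (hF : IsFol C β f fx) :
    ContinuousOn (fun p : ℝ × ℝ => f p.1 p.2) MSq := by
  rintro ⟨x₀, y₀⟩ ⟨hx₀, hy₀⟩
  simp only at hx₀ hy₀
  rw [ContinuousWithinAt, tendsto_iff_dist_tendsto_zero]
  have hcx : ContinuousOn (fun x => f x y₀) unitInterval :=
    fun x hx => (hF.hasDeriv y₀ hy₀ x hx).continuousWithinAt
  have hb : ContinuousOn (fun p : ℝ × ℝ => C * |p.2 - y₀| ^ β + |f p.1 y₀ - f x₀ y₀|) MSq := by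
    refine ContinuousOn.add ?_ ?_
    · refine Continuous.continuousOn ?_
      refine continuous_const.mul ?_
      exact Continuous.rpow_const (by fun_prop) (fun _ => Or.inr hβ0.le)
    · refine ContinuousOn.abs (ContinuousOn.sub ?_ continuousOn_const)
      exact hcx.comp continuousOn_fst (fun p hp => hp.1)
  have hb0 := hb (x₀, y₀) ⟨hx₀, hy₀⟩
  rw [ContinuousWithinAt] at hb0
  simp only [sub_self, abs_zero, Real.zero_rpow hβ0.ne', mul_zero, add_zero] at hb0
  refine squeeze_zero' (Eventually.of_forall fun _ => dist_nonneg) ?_ hb0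
  filter_upwards [self_mem_nhdsWithin] with p hp
  rw [Real.dist_eq]
  have h1 : |f p.1 p.2 - f p.1 y₀| ≤ C * |p.2 - y₀| ^ β := by
    by_cases h : y₀ = p.2
    · simp [← h, Real.zero_rpow hβ0.ne']
    · exact hF.upper p.1 hp.1 y₀ hy₀ p.2 hp.2 h
  have h2 := abs_sub_le (f p.1 p.2) (f p.1 y₀) (f x₀ y₀)
  linarith

lemma fol_cont2 {C β : ℝ} (hβ0 : 0 < β) {f fx : ℝ → ℝ → ℝ} (hF : IsFol C β f fx)
    {x : ℝ} (hx : x ∈ unitInterval) : ContinuousOn (f x) unitInterval :=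
  (fol_cont hβ0 hF).comp (f := fun y => (x, y)) (by fun_prop) (fun y hy => ⟨hx, hy⟩)

lemma fol_inj {C β : ℝ} (hC : 0 < C) {f fx : ℝ → ℝ → ℝ} (hF : IsFol C β f fx)
    {x : ℝ} (hx : x ∈ unitInterval) : InjOn (f x) unitInterval := by
  intro y₁ h1 y₂ h2 h
  by_contra hne
  have := hF.lower x hx y₁ h1 y₂ h2 hne
  rw [h, sub_self, abs_zero] at this
  have h3 : 0 < |y₂ - y₁| := abs_pos.2 (sub_ne_zero.2 (Ne.symm hne))
  have : 0 < C⁻¹ * |y₂ - y₁| ^ (1 / β) := by positivity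
  linarith

lemma fol_mono {C β : ℝ} (hC : 0 < C) (hβ0 : 0 < β) {f fx : ℝ → ℝ → ℝ} (hF : IsFol C β f fx)
    {x : ℝ} (hx : x ∈ unitInterval) : MonotoneOn (f x) unitInterval := by
  refine (ContinuousOn.strictMonoOn_of_injOn_Icc zero_le_one ?_ (fol_cont2 hβ0 hF hx)
    (fol_inj hC hF hx)).monotoneOn
  rw [hF.eq_bot x hx, hF.eq_top x hx]; exact zero_le_one

lemma fol_hinv {C β : ℝ} (hβ0 : 0 < β) {f fx : ℝ → ℝ → ℝ} (hF : IsFol C β f fx)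
    {x : ℝ} (hx : x ∈ unitInterval) {z : ℝ} (hz : z ∈ unitInterval) :
    hinv f x z ∈ unitInterval ∧ f x (hinv f x z) = z := by
  have := intermediate_value_Icc zero_le_one (fol_cont2 hβ0 hF hx)
  rw [hF.eq_bot x hx, hF.eq_top x hx] at this
  obtain ⟨y, hy, hyz⟩ := this hz
  have h : ∃ a ∈ unitInterval, f x a = z := ⟨y, hy, hyz⟩
  exact ⟨Function.invFunOn_mem h, Function.invFunOn_eq h⟩

lemma lower_inv {C β d e : ℝ} (hC : 0 < C) (hβ0 : 0 < β) (hd : 0 ≤ d)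
    (h : C⁻¹ * d ^ (1 / β) ≤ e) : d ≤ (C * e) ^ β := by
  have h1 : d ^ (1 / β) ≤ C * e := by
    rw [inv_mul_le_iff₀ hC] at h; exact h
  calc d = (d ^ (1 / β)) ^ β := by
        rw [← Real.rpow_mul hd, one_div, inv_mul_cancel₀ hβ0.ne', Real.rpow_one]
    _ ≤ _ := Real.rpow_le_rpow (by positivity) h1 hβ0.le

lemma hinv_holder {C β : ℝ} (hC : 0 < C) (hβ0 : 0 < β) {f fx : ℝ → ℝ → ℝ} (hF : IsFol C β f fx)
    {x : ℝ} (hx : x ∈ unitInterval) {z₁ z₂ : ℝ} (h1 : z₁ ∈ unitInterval) (h2 : z₂ ∈ unitInterval) :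
    |hinv f x z₂ - hinv f x z₁| ≤ C ^ β * |z₂ - z₁| ^ β := by
  obtain ⟨m1, e1⟩ := fol_hinv hβ0 hF hx h1
  obtain ⟨m2, e2⟩ := fol_hinv hβ0 hF hx h2
  by_cases h : hinv f x z₁ = hinv f x z₂
  · rw [h, sub_self, abs_zero]; positivity
  · have := hF.lower x hx _ m1 _ m2 h
    rw [e1, e2] at this
    rw [← Real.mul_rpow hC.le (abs_nonneg _)]
    exact lower_inv hC hβ0 (abs_nonneg _) this

lemma hinv_close {C β ε : ℝ} (hC : 0 < C) (hβ0 : 0 < β) {f fx g gx : ℝ → ℝ → ℝ}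
    (hF : IsFol C β f fx) (hG : IsFol C β g gx)
    (hε : 0 ≤ ε) {x : ℝ} (hx : x ∈ unitInterval) (hfg : ∀ y ∈ unitInterval, |g x y - f x y| ≤ ε)
    {z : ℝ} (hz : z ∈ unitInterval) :
    |hinv g x z - hinv f x z| ≤ (C * ε) ^ β := by
  obtain ⟨m1, e1⟩ := fol_hinv hβ0 hF hx hz
  obtain ⟨m2, e2⟩ := fol_hinv hβ0 hG hx hz
  by_cases h : hinv f x z = hinv g x z
  · rw [h, sub_self, abs_zero]; positivity
  · have := hG.lower x hx _ m1 _ m2 h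
    refine lower_inv hC hβ0 (abs_nonneg _) (this.trans ?_)
    rw [e2]
    have := hfg _ m1
    rwa [e1, abs_sub_comm] at this

/-- Interpolation between `C⁰` and `β`-Hölder bounds. -/
lemma holDist_le {α β K ε : ℝ} (hα : 0 ≤ α) (hαβ : α < β) (hK : 0 ≤ K) (hε : 0 ≤ ε) (h k : ℝ → ℝ)
    (hc : ∀ y ∈ unitInterval, |h y - k y| ≤ ε)
    (hh : ∀ y₁ ∈ unitInterval, ∀ y₂ ∈ unitInterval, y₁ ≠ y₂ → |h y₂ - h y₁| ≤ K * |y₂ - y₁| ^ β)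
    (hk : ∀ y₁ ∈ unitInterval, ∀ y₂ ∈ unitInterval, y₁ ≠ y₂ → |k y₂ - k y₁| ≤ K * |y₂ - y₁| ^ β) :
    holDist α h k ≤ (2 * ε) ^ (1 - α / β) * (2 * K) ^ (α / β) := by
  have hβ0 : 0 < β := hα.trans_lt hαβ
  refine Real.sSup_le ?_ (by positivity)
  rintro r ⟨y₁, h1, y₂, h2, hne, rfl⟩
  have hd : 0 < |y₂ - y₁| := abs_pos.2 (sub_ne_zero.2 (Ne.symm hne))
  rw [div_le_iff₀ (by positivity)]
  set A := |(h y₂ - k y₂) - (h y₁ - k y₁)| with hA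
  have hA0 : 0 ≤ A := abs_nonneg _
  have hA1 : A ≤ 2 * ε := by
    have := abs_sub (h y₂ - k y₂) (h y₁ - k y₁)
    have := hc _ h1
    have := hc _ h2
    linarith
  have hA2 : A ≤ 2 * K * |y₂ - y₁| ^ β := by
    have e : (h y₂ - k y₂) - (h y₁ - k y₁) = (h y₂ - h y₁) - (k y₂ - k y₁) := by ring
    have := abs_sub (h y₂ - h y₁) (k y₂ - k y₁)
    rw [← e] at this
    have := hh _ h1 _ h2 hne
    have := hk _ h1 _ h2 hne
    linarith
  have hθ0 : 0 ≤ α / β := by positivity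
  have hθ1 : 0 ≤ 1 - α / β := by
    rw [sub_nonneg, div_le_one hβ0]; exact hαβ.le
  have e1 : (|y₂ - y₁| ^ β) ^ (α / β) = |y₂ - y₁| ^ α := by
    rw [← Real.rpow_mul hd.le, mul_div_cancel₀ _ hβ0.ne']
  calc A = A ^ (1 - α / β) * A ^ (α / β) := by
        rw [← Real.rpow_add_of_nonneg hA0 hθ1 hθ0]; simp
    _ ≤ (2 * ε) ^ (1 - α / β) * (2 * K * |y₂ - y₁| ^ β) ^ (α / β) := by
        gcongr
    _ = _ := by
        rw [Real.mul_rpow (by positivity : 0 ≤ 2 * K) (by positivity : 0 ≤ |y₂ - y₁| ^ β), e1]; ring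

lemma Bn_isFol {C β : ℝ} (hC : 0 < C) (hβ0 : 0 < β) (hβ : β < 1) {f fx : ℝ → ℝ → ℝ}
    (hF : IsFol C β f fx) (n : ℕ) (hn : n ≠ 0) :
    IsFol C β (fun x => Bn n (f x)) (fun x => Bn n (fx x)) := by
  have hlow : BiHolderLower C β (fun x => Bn n (f x)) := by
    intro x hx y₁ h1 y₂ h2 hne
    beta_reduce
    have hγ : 1 ≤ 1 / β := by rw [one_le_div hβ0]; exact hβ.le
    have hh := Bn_lower (inv_nonneg.2 hC.le) hγ (f x) (fol_mono hC hβ0 hF hx) (hF.lower x hx) n hn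
    rcases le_total y₁ y₂ with h | h
    · exact hh y₁ y₂ h1.1 h h2.2
    · rw [abs_sub_comm y₂, abs_sub_comm (Bn n (f x) y₂)]
      exact hh y₂ y₁ h2.1 h h1.2
  have hup : BiHolderUpper C β (fun x => Bn n (f x)) := by
    intro x hx y₁ h1 y₂ h2 hne
    beta_reduce
    have hh := Bn_upper hC.le hβ0 hβ.le (f x) (hF.upper x hx) n hn
    rcases le_total y₁ y₂ with h | h
    · exact hh y₁ y₂ h1.1 h h2.2
    · rw [abs_sub_comm y₂, abs_sub_comm (Bn n (f x) y₂)]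
      exact hh y₂ y₁ h2.1 h h1.2
  have hmono : ∀ x ∈ unitInterval, MonotoneOn (Bn n (f x)) unitInterval := by
    intro x hx y₁ h1 y₂ h2 h
    obtain ⟨ι, _, w, a, b, hw, hs, hab, ha, hb, hid, hB⟩ :=
      Bn_coupling y₁ y₂ h1.1 h h2.2 n hn
    rw [← sub_nonneg, hB]
    exact Finset.sum_nonneg fun i _ => mul_nonneg (hw i)
      (sub_nonneg.2 (fol_mono hC hβ0 hF hx (ha i) (hb i) (hab i)))
  have hz : ∀ x ∈ unitInterval, Bn n (f x) 0 = 0 := fun x hx => by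
    rw [Bn_at_zero, hF.eq_bot x hx]
  have ho : ∀ x ∈ unitInterval, Bn n (f x) 1 = 1 := fun x hx => by
    rw [Bn_at_one n hn, hF.eq_top x hx]
  refine ⟨?_, ?_, ?_, ?_, hz, ho, hlow, hup⟩
  · intro x hx y hy
    constructor
    · rw [← hz x hx]
      exact hmono x hx unitInterval.zero_mem hy hy.1
    · rw [← ho x hx]
      exact hmono x hx hy unitInterval.one_mem hy.2
  · intro y hy x hx
    unfold Bn Bs
    refine HasDerivWithinAt.fun_sum fun ij hij => ?_
    have hm : ij.1 ≤ n := by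
      have := Finset.HasAntidiagonal.mem_antidiagonal.1 hij
      omega
    exact ((hF.hasDeriv _ (node_mem hm) x hx).const_mul _).const_mul _
  · unfold Bn Bs
    refine continuousOn_finsetSum _ fun ij hij => ?_
    have hm : ij.1 ≤ n := by
      have := Finset.HasAntidiagonal.mem_antidiagonal.1 hij
      omega
    have : ContinuousOn (fun p : ℝ × ℝ => fx p.1 ((ij.1 : ℝ) / n)) MSq :=
      hF.derivCont.comp (f := fun p : ℝ × ℝ => (p.1, (ij.1 : ℝ) / n)) (by fun_prop)
        (fun p hp => ⟨hp.1, node_mem hm⟩)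
    exact continuousOn_const.mul (ContinuousOn.mul (by fun_prop) this)
  · intro y hy
    rw [Bn_congr (h := fun y => y) (fun y hy => hF.eq_id y hy), Bn_id n hn]

/-- For every `f ∈ F_(C,β)` and `ξ > 0` there exists `f₂ ∈ F_(C,β)` which is
`C²` in the second variable with `d_α(f₂, f) < ξ/3`; in particular such elements are dense. -/
theorem stmt11 (C β α : ℝ) (hC : 1 < C) (hα : 0 ≤ α) (hαβ : α < β) (hβ : β < 1)
    (F : Fol C β) (ξ : ℝ) (hξ : 0 < ξ) :
    ∃ F₂ : Fol C β, (∀ x ∈ unitInterval, ContDiffOn ℝ 2 (F₂.f x) unitInterval) ∧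
      dalphaF α F₂ F < ξ / 3 := by
  have hβ0 : 0 < β := hα.trans_lt hαβ
  have hC0 : 0 < C := by linarith
  have hθ : 0 < 1 - α / β := by
    rw [sub_pos, div_lt_one hβ0]; exact hαβ
  -- choose the accuracy
  have hlim : Tendsto (fun ε : ℝ => ε + ε +
      max ((2 * ε) ^ (1 - α / β) * (2 * C) ^ (α / β))
        ((2 * (C * ε) ^ β) ^ (1 - α / β) * (2 * C ^ β) ^ (α / β))) (𝓝[>] 0) (𝓝 0) := by
    have hc : Continuous (fun ε : ℝ => ε + ε +
      max ((2 * ε) ^ (1 - α / β) * (2 * C) ^ (α / β))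
        ((2 * (C * ε) ^ β) ^ (1 - α / β) * (2 * C ^ β) ^ (α / β))) := by
      refine (continuous_id.add continuous_id).add (Continuous.max ?_ ?_)
      · exact (Continuous.rpow_const (by fun_prop) (fun _ => Or.inr hθ.le)).mul continuous_const
      · refine (Continuous.rpow_const ?_ (fun _ => Or.inr hθ.le)).mul continuous_const
        exact continuous_const.mul
          (Continuous.rpow_const (by fun_prop) (fun _ => Or.inr hβ0.le))
    have := hc.tendsto 0
    simp only [mul_zero, Real.zero_rpow hθ.ne', Real.zero_rpow hβ0.ne', zero_mul, max_self,
      add_zero] at this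
    exact this.mono_left nhdsWithin_le_nhds
  obtain ⟨ε, hsmall, hε⟩ := ((hlim.eventually_lt_const (by positivity : 0 < ξ / 3)).and
    self_mem_nhdsWithin).exists
  have hε : 0 < ε := hε
  obtain ⟨n, hn, hn1, hn2⟩ := ((eventually_ne_atTop 0).and
    ((Bn_uniform F.f (fol_cont hβ0 F.isFol) ε hε).and
      (Bn_uniform F.fx F.isFol.derivCont ε hε))).exists
  have hG := Bn_isFol hC0 hβ0 hβ F.isFol n hn
  refine ⟨⟨_, _, hG⟩, fun x _ => (Bn_contDiff n (F.f x)).contDiffOn, ?_⟩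
  refine lt_of_le_of_lt ?_ hsmall
  unfold dalphaF dalpha
  refine add_le_add (add_le_add ?_ ?_) ?_
  · refine Real.sSup_le ?_ hε.le
    rintro r ⟨x, hx, y, hy, rfl⟩
    exact (hn1 x hx y hy).le
  · refine Real.sSup_le ?_ hε.le
    rintro r ⟨x, hx, y, hy, rfl⟩
    exact (hn2 x hx y hy).le
  · refine Real.sSup_le ?_ (le_max_of_le_left (by positivity))
    rintro r ⟨x, hx, rfl⟩
    refine max_le_max ?_ ?_
    · exact holDist_le hα hαβ hC0.le hε.le _ _ (fun y hy => (hn1 x hx y hy).le)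
        (hG.upper x hx) (F.isFol.upper x hx)
    · exact holDist_le hα hαβ (by positivity) (by positivity) _ _
        (fun z hz => hinv_close hC0 hβ0 F.isFol hG hε.le hx (fun y hy => (hn1 x hx y hy).le) hz)
        (fun z₁ h1 z₂ h2 _ => hinv_holder hC0 hβ0 hG hx h1 h2)
        (fun z₁ h1 z₂ h2 _ => hinv_holder hC0 hβ0 F.isFol hx h1 h2)

end
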